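/- arXiv:2603.12428 — 5 statements merged into one kernel-verified Lean document; each statement's English description precedes it below -/
import Mathlib

section
/- Let G be a finite group, N a normal subgroup of G which is a simple non-abelian group, and r an element of N. If the intersection of the conjugacy class O_r^G with N is strictly larger than the orbit O_r^N (that is, O_r^G ∩ N ≠ O_r^N), then the conjugacy class O_r^G is of type C. -/
/-- The orbit of `g` under conjugation by the subgroup `H` of `G`. -/
def convOrbit {G : Type*} [Group G] (H : Subgroup G) (g : G) : Set G :=
  (fun h => h * g * h⁻¹) '' (H : Set G)

/-- A subset `O` of a group `G` (typically a conjugacy class) is of *type C* if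
there are a subgroup `H ≤ G` and elements `r, s ∈ H ∩ O` with `r s ≠ s r`,
`H = ⟨O_r^H ∪ O_s^H⟩`, `O_r^H ≠ O_s^H`, and either both orbits have more than
two elements or one of them has more than four elements. -/
def IsTypeC {G : Type*} [Group G] (O : Set G) : Prop :=
  ∃ (H : Subgroup G) (r s : G),
    r ∈ H ∧ r ∈ O ∧ s ∈ H ∧ s ∈ O ∧
    r * s ≠ s * r ∧
    Subgroup.closure (convOrbit H r ∪ convOrbit H s) = H ∧
    convOrbit H r ≠ convOrbit H s ∧
    ((2 < (convOrbit H r).ncard ∧ 2 < (convOrbit H s).ncard) ∨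
      4 < (convOrbit H r).ncard ∨ 4 < (convOrbit H s).ncard)

/-!
Take `H = N`. By simplicity the `N`-orbit of any `x ≠ 1` in `N` generates `N`, and `N` has trivial
centre; hence no nontrivial element of `N` commutes with a whole nontrivial `N`-orbit. For
`s ∈ O_r^G ∩ N` outside `O_r^N` this yields some `t ∈ O_s^N` that does not commute with `r`. It also
bounds the orbit sizes: if `y ∈ O_x^N` does not commute with `x`, then `x`, `y` and `x y x⁻¹` are
three distinct elements of `O_x^N`.
-/

theorem center_eq_bot_of_not_isMulCommutative {K : Type*} [Group K] [IsSimpleGroup K]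
    (hK : ¬ IsMulCommutative K) : Subgroup.center K = ⊥ :=
  Subgroup.Normal.eq_bot_or_eq_top inferInstance |>.resolve_right fun htop =>
    hK (Subgroup.center_eq_top_iff.1 htop)

theorem normalClosure_singleton_eq_top {K : Type*} [Group K] [IsSimpleGroup K] {x : K}
    (hx : x ≠ 1) : Subgroup.normalClosure {x} = ⊤ :=
  Subgroup.normalClosure_normal.eq_bot_or_eq_top.resolve_left fun hbot =>
    hx (Subgroup.normalClosure_eq_bot_iff.1 hbot rfl)

section ConvOrbit

variable {G : Type*} [Group G] {H K : Subgroup G} {x y : G}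

theorem mem_convOrbit_self (H : Subgroup G) (x : G) : x ∈ convOrbit H x :=
  ⟨1, H.one_mem, by simp⟩

theorem conj_mem_convOrbit {h : G} (hh : h ∈ H) (hy : y ∈ convOrbit H x) :
    h * y * h⁻¹ ∈ convOrbit H x := by
  obtain ⟨k, hk, rfl⟩ := hy
  exact ⟨h * k, H.mul_mem hh hk, by group⟩

theorem mem_convOrbit_comm : y ∈ convOrbit H x ↔ x ∈ convOrbit H y := by
  suffices symm : ∀ {x y : G}, y ∈ convOrbit H x → x ∈ convOrbit H y from ⟨symm, symm⟩
  rintro x _ ⟨h, hh, rfl⟩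
  exact ⟨h⁻¹, H.inv_mem hh, by group⟩

theorem convOrbit_mono (hHK : H ≤ K) (x : G) : convOrbit H x ⊆ convOrbit K x :=
  Set.image_mono hHK

theorem convOrbit_subset_of_mem (hy : y ∈ convOrbit H x) : convOrbit H y ⊆ convOrbit H x := by
  rintro _ ⟨h, hh, rfl⟩
  exact conj_mem_convOrbit hh hy

theorem convOrbit_subset (hx : x ∈ H) : convOrbit H x ⊆ H := by
  rintro _ ⟨h, hh, rfl⟩
  exact H.mul_mem (H.mul_mem hh hx) (H.inv_mem hh)

theorem eq_one_iff_of_mem_convOrbit (hy : y ∈ convOrbit H x) : y = 1 ↔ x = 1 := by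
  obtain ⟨h, -, rfl⟩ := hy
  exact conj_eq_one_iff

theorem finite_convOrbit (H : Subgroup G) [Finite H] (x : G) : (convOrbit H x).Finite :=
  Set.Finite.image _ (Set.toFinite (H : Set G))

theorem convOrbit_coe (x : H) : convOrbit H (x : G) = H.subtype '' Group.conjugatesOfSet {x} := by
  ext y
  constructor
  · rintro ⟨h, hh, rfl⟩
    exact ⟨_, Group.conj_mem_conjugatesOfSet (c := ⟨h, hh⟩) (Group.subset_conjugatesOfSet rfl), rfl⟩
  · rintro ⟨z, hz, rfl⟩
    obtain ⟨_, rfl, hxz⟩ := Group.mem_conjugatesOfSet_iff.1 hz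
    obtain ⟨c, rfl⟩ := isConj_iff.1 hxz
    exact ⟨c, c.2, rfl⟩

theorem closure_convOrbit_coe (x : H) :
    Subgroup.closure (convOrbit H (x : G)) = (Subgroup.normalClosure {x}).map H.subtype := by
  rw [convOrbit_coe, ← MonoidHom.map_closure, Subgroup.normalClosure]

theorem two_lt_ncard_convOrbit [Finite H] (hx : x ∈ H) (hy : y ∈ convOrbit H x)
    (hxy : x * y ≠ y * x) : 2 < (convOrbit H x).ncard := by
  have x_ne_y : x ≠ y := fun h => hxy (by rw [h])
  have conj_ne_y : x * y * x⁻¹ ≠ y := fun h => hxy (mul_inv_eq_iff_eq_mul.1 h)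
  have conj_ne_x : x * y * x⁻¹ ≠ x := fun h =>
    x_ne_y (mul_left_cancel (mul_inv_eq_iff_eq_mul.1 h)).symm
  rw [Set.two_lt_ncard (finite_convOrbit H x)]
  exact ⟨x, mem_convOrbit_self H x, y, hy, x * y * x⁻¹, conj_mem_convOrbit hx hy,
    x_ne_y, conj_ne_x.symm, conj_ne_y.symm⟩

end ConvOrbit

section SimpleSubgroup

variable {G : Type*} [Group G] {N : Subgroup G} [IsSimpleGroup N] {x y : G}

theorem closure_convOrbit_eq_self (hx : x ∈ N) (hx1 : x ≠ 1) :
    Subgroup.closure (convOrbit N x) = N := by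
  lift x to N using hx
  rw [closure_convOrbit_coe, normalClosure_singleton_eq_top (by simpa using hx1),
    ← MonoidHom.range_eq_map, Subgroup.range_subtype]

theorem closure_convOrbit_union_eq_self (hx : x ∈ N) (hx1 : x ≠ 1) (hy : y ∈ N) (hy1 : y ≠ 1) :
    Subgroup.closure (convOrbit N x ∪ convOrbit N y) = N := by
  rw [Subgroup.closure_union, closure_convOrbit_eq_self hx hx1, closure_convOrbit_eq_self hy hy1,
    sup_idem]

theorem exists_mem_convOrbit_mul_ne (hN : ¬ IsMulCommutative N) (hx : x ∈ N) (hx1 : x ≠ 1)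
    (hy : y ∈ N) (hy1 : y ≠ 1) : ∃ z ∈ convOrbit N y, x * z ≠ z * x := by
  by_contra! x_comm
  have le_centralizer : N ≤ Subgroup.centralizer {x} := by
    rw [← closure_convOrbit_eq_self hy hy1, Subgroup.closure_le]
    exact fun z hz => Subgroup.mem_centralizer_singleton_iff.2 (x_comm z hz).symm
  have mem_center : (⟨x, hx⟩ : N) ∈ Subgroup.center N := Subgroup.mem_center_iff.2 fun g =>
    Subtype.ext (Subgroup.mem_centralizer_singleton_iff.1 (le_centralizer g.2))
  rw [center_eq_bot_of_not_isMulCommutative hN, Subgroup.mem_bot] at mem_center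
  exact hx1 (congrArg Subtype.val mem_center)

theorem two_lt_ncard_convOrbit_of_ne_one [Finite N] (hN : ¬ IsMulCommutative N) (hx : x ∈ N)
    (hx1 : x ≠ 1) : 2 < (convOrbit N x).ncard := by
  obtain ⟨y, hy, hxy⟩ := exists_mem_convOrbit_mul_ne hN hx hx1 hx hx1
  exact two_lt_ncard_convOrbit hx hy hxy

theorem isTypeC_of_notMem_convOrbit [Finite N] (hN : ¬ IsMulCommutative N) {O : Set G}
    (hxO : x ∈ O) (hyO : convOrbit N y ⊆ O) (hx : x ∈ N) (hx1 : x ≠ 1) (hy : y ∈ N) (hy1 : y ≠ 1)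
    (hyx : y ∉ convOrbit N x) : IsTypeC O := by
  obtain ⟨z, hz, hxz⟩ := exists_mem_convOrbit_mul_ne hN hx hx1 hy hy1
  have hzN : z ∈ N := convOrbit_subset hy hz
  have hz1 : z ≠ 1 := (eq_one_iff_of_mem_convOrbit hz).not.2 hy1
  have orbits_ne : convOrbit N x ≠ convOrbit N z := fun h =>
    hyx (h ▸ mem_convOrbit_comm.1 hz)
  exact ⟨N, x, z, hx, hxO, hzN, hyO hz, hxz, closure_convOrbit_union_eq_self hx hx1 hzN hz1,
    orbits_ne, .inl ⟨two_lt_ncard_convOrbit_of_ne_one hN hx hx1,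
      two_lt_ncard_convOrbit_of_ne_one hN hzN hz1⟩⟩

end SimpleSubgroup

theorem stmt0_general {G : Type*} [Group G] (N : Subgroup G) [Finite N] [IsSimpleGroup N]
    (hna : ∃ a b : N, a * b ≠ b * a) (r : G) (hr : r ∈ N)
    (h : convOrbit (⊤ : Subgroup G) r ∩ (N : Set G) ≠ convOrbit N r) :
    IsTypeC (convOrbit (⊤ : Subgroup G) r) := by
  have hN : ¬ IsMulCommutative N := fun hcomm => by
    obtain ⟨a, b, hab⟩ := hna
    exact hab (hcomm.is_comm.comm a b)
  have orbit_subset : convOrbit N r ⊆ convOrbit ⊤ r ∩ N :=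
    Set.subset_inter (convOrbit_mono le_top r) (convOrbit_subset hr)
  obtain ⟨s, ⟨hsO, hsN⟩, hs⟩ := Set.exists_of_ssubset (orbit_subset.ssubset_of_ne h.symm)
  have hsr : s = 1 ↔ r = 1 := eq_one_iff_of_mem_convOrbit hsO
  have hr1 : r ≠ 1 := fun hr1 => hs ((hsr.2 hr1).trans hr1.symm ▸ mem_convOrbit_self N r)
  have orbit_s_subset : convOrbit N s ⊆ convOrbit ⊤ r :=
    (convOrbit_mono le_top s).trans (convOrbit_subset_of_mem hsO)
  exact isTypeC_of_notMem_convOrbit hN (mem_convOrbit_self ⊤ r) orbit_s_subset hr hr1 hsN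
    (hsr.not.2 hr1) hs

/-- If `N` is a normal simple non-abelian subgroup of a finite group `G`, `r ∈ N`, and
`O_r^G ∩ N ≠ O_r^N`, then the conjugacy class `O_r^G` is of type C. -/
theorem stmt0 {G : Type*} [Group G] [Finite G] (N : Subgroup G) [N.Normal]
    [IsSimpleGroup N] (hna : ∃ a b : N, a * b ≠ b * a)
    (r : G) (hr : r ∈ N)
    (h : convOrbit (⊤ : Subgroup G) r ∩ (N : Set G) ≠ convOrbit N r) :
    IsTypeC (convOrbit (⊤ : Subgroup G) r) :=
  stmt0_general N hna r hr h
end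

section
/- Let Γ be a finite abelian additive group and 𝔱 an automorphism of Γ whose only fixed point is 0. Form the semidirect product G = Γ ⋊ ℤ in which n ∈ ℤ acts on Γ as 𝔱ⁿ. Then the conjugacy class of the element (0, 1) in G is exactly the set {(a, 1) : a ∈ Γ}; in particular, this conjugacy class has exactly |Γ| elements. -/
/-- The action of `ℤ` (written multiplicatively) on `Γ` (written multiplicatively)
in which `n` acts as the `n`-th power of the automorphism `t`. -/
def tAction {Γ : Type*} [AddCommGroup Γ] (t : Γ ≃+ Γ) :
    Multiplicative ℤ →* MulAut (Multiplicative Γ) :=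
  zpowersHom (MulAut (Multiplicative Γ)) (AddEquiv.toMultiplicative t)

/-!
Conjugating `(1, g)` by `(n, 1)` in `N ⋊[φ] G` gives `(n / φ g n, g)`. If `φ g` has no nontrivial
fixed point, then `n ↦ n / φ g n` is injective, hence surjective when `N` is finite, and so every
element over `g` is conjugate to `(1, g)`. Conversely, the projection to `G` sends conjugates of
`(1, g)` to conjugates of `g`, which all equal `g` when `g` is central.
-/

open SemidirectProduct MonoidHom

section SemidirectProduct

variable {N G : Type*} [Group N] [Group G] {φ : G →* MulAut N} {g : G}

theorem inl_mul_inr_mul_inl_inv (n : N) (g : G) :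
    (inl n * inr g * (inl n)⁻¹ : N ⋊[φ] G) = ⟨commutatorMap (φ g) n, g⟩ := by
  ext <;> simp [div_eq_mul_inv]

theorem inr_mul_mk_mul_inr_inv (k : G) (n : N) (g : G) :
    (inr k * ⟨n, g⟩ * (inr k)⁻¹ : N ⋊[φ] G) = ⟨φ k n, k * g * k⁻¹⟩ := by
  ext <;> simp

theorem isConj_inr_mk (hsurj : Function.Surjective (commutatorMap (φ g))) (n : N) :
    IsConj (inr g : N ⋊[φ] G) ⟨n, g⟩ := by
  obtain ⟨m, rfl⟩ := hsurj n
  exact isConj_iff.mpr ⟨inl m, inl_mul_inr_mul_inl_inv m g⟩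

theorem isConj_inr_iff (hsurj : Function.Surjective (commutatorMap (φ g))) {x : N ⋊[φ] G} :
    IsConj (inr g) x ↔ IsConj g x.right := by
  refine ⟨fun hx => rightHom.map_isConj hx, fun hx => ?_⟩
  obtain ⟨k, hk⟩ := isConj_iff.mp hx
  have hfibre : IsConj (inr g : N ⋊[φ] G) ⟨(φ k)⁻¹ x.left, g⟩ := isConj_inr_mk hsurj _
  refine hfibre.trans (isConj_iff.mpr ⟨inr k, ?_⟩)
  rw [inr_mul_mk_mul_inr_inv, MulAut.apply_inv_self, hk]

theorem ncard_setOf_exists_eq_mk (φ : G →* MulAut N) (g : G) :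
    {x : N ⋊[φ] G | ∃ n, x = ⟨n, g⟩}.ncard = Nat.card N := by
  have hinj : Function.Injective fun n : N => (⟨n, g⟩ : N ⋊[φ] G) :=
    fun _ _ h => congrArg SemidirectProduct.left h
  rw [← Set.ncard_range_of_injective hinj]
  simp only [Set.range, eq_comm]

theorem stmt7_general [Finite N] (hg : g ∈ Subgroup.center G) (hfix : FixedPointFree (φ g)) :
    {x : N ⋊[φ] G | ∃ h, h * ⟨1, g⟩ * h⁻¹ = x} = {x | ∃ n, x = ⟨n, g⟩} ∧
      {x : N ⋊[φ] G | ∃ h, h * ⟨1, g⟩ * h⁻¹ = x}.ncard = Nat.card N := by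
  have hclass : {x : N ⋊[φ] G | ∃ h, h * ⟨1, g⟩ * h⁻¹ = x} = {x | ∃ n, x = ⟨n, g⟩} := by
    ext x
    calc (∃ h, h * inr g * h⁻¹ = x)
      _ ↔ IsConj (inr g) x := isConj_iff.symm
      _ ↔ IsConj g x.right := isConj_inr_iff hfix.commutatorMap_surjective
      _ ↔ x.right = g := ⟨fun hx => (hx.eq_of_left_mem_center hg).symm, fun hx => hx ▸ .refl _⟩
      _ ↔ ∃ n, x = ⟨n, g⟩ :=
        ⟨fun hx => ⟨x.left, SemidirectProduct.ext rfl hx⟩, fun ⟨_, hx⟩ => hx ▸ rfl⟩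
  exact ⟨hclass, hclass ▸ ncard_setOf_exists_eq_mk φ g⟩

end SemidirectProduct

theorem fixedPointFree_tAction_ofAdd_one {Γ : Type*} [AddCommGroup Γ] {t : Γ ≃+ Γ}
    (hfix : ∀ a : Γ, t a = a → a = 0) :
    FixedPointFree (tAction t (Multiplicative.ofAdd 1)) := by
  intro a ha
  simp only [tAction, zpowersHom_apply, toAdd_ofAdd, zpow_one] at ha
  exact hfix a.toAdd ha

/-- Let `Γ` be a finite abelian group and `𝔱` an automorphism whose only fixed point
is `0`.  In the semidirect product `Γ ⋊ ℤ` (where `n` acts as `𝔱ⁿ`), the conjugacy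
class of `(0, 1)` is exactly `{(a, 1) : a ∈ Γ}`, and it has exactly `|Γ|` elements. -/
theorem stmt7 {Γ : Type*} [AddCommGroup Γ] [Finite Γ] (t : Γ ≃+ Γ)
    (hfix : ∀ a : Γ, t a = a → a = 0) :
    ({x : Multiplicative Γ ⋊[tAction t] Multiplicative ℤ |
        ∃ h, h * ⟨Multiplicative.ofAdd 0, Multiplicative.ofAdd 1⟩ * h⁻¹ = x} =
      {x : Multiplicative Γ ⋊[tAction t] Multiplicative ℤ |
        ∃ a : Γ, x = ⟨Multiplicative.ofAdd a, Multiplicative.ofAdd 1⟩}) ∧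
    ({x : Multiplicative Γ ⋊[tAction t] Multiplicative ℤ |
        ∃ h, h * ⟨Multiplicative.ofAdd 0, Multiplicative.ofAdd 1⟩ * h⁻¹ = x}).ncard =
      Nat.card Γ :=
  stmt7_general (Subgroup.mem_center_iff.mpr fun k => mul_comm k _)
    (fixedPointFree_tAction_ofAdd_one hfix)
end

section
/- Let G be a finite group, t ∈ G, and Γ ≤ G an abelian subgroup such that t normalizes Γ and the only element of Γ commuting with t is the identity. Then: (i) the map a ↦ a t a⁻¹ from Γ to G is injective; (ii) its image X = {a t a⁻¹ : a ∈ Γ} equals the coset {γ t : γ ∈ Γ}; (iii) X is contained in the conjugacy class of t in G and is closed under conjugation, i.e., x y x⁻¹ ∈ X for all x, y ∈ X. In particular, X is a subrack of the conjugacy class of t with exactly |Γ| elements. -/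
/-!
Since `t` normalizes `Γ`, the identity `a t a⁻¹ = (a · t a⁻¹ t⁻¹) t` places every `Γ`-conjugate of
`t` in the coset `Γ t`. Two of them coincide only if `b⁻¹ a` commutes with `t`, so when the
centralizer of `t` in `Γ` is trivial there are `|Γ|` of them, and they exhaust the coset. Closure
under conjugation is then checked on `Γ t`: `(a t) (b t) (a t)⁻¹ = (a · t (b a⁻¹) t⁻¹) t`.
-/

section Conjugates

variable {G : Type*} [Group G] {t : G} {Γ : Subgroup G}

theorem conj_eq_conj_iff_commute {a b : G} :
    a * t * a⁻¹ = b * t * b⁻¹ ↔ Commute (b⁻¹ * a) t := by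
  rw [mul_inv_eq_iff_eq_mul, mul_assoc b, mul_assoc b, ← inv_mul_eq_iff_eq_mul, commute_iff_eq]
  simp only [mul_assoc]

theorem injOn_conj_of_centralizer_trivial (hcent : ∀ a ∈ Γ, a * t = t * a → a = 1) :
    Set.InjOn (fun a : G => a * t * a⁻¹) (Γ : Set G) := by
  intro a ha b hb hconj
  have hcomm : Commute (b⁻¹ * a) t := conj_eq_conj_iff_commute.mp hconj
  have hone : b⁻¹ * a = 1 := hcent _ (Γ.mul_mem (Γ.inv_mem hb) ha) hcomm
  exact (inv_mul_eq_one.mp hone).symm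

theorem conj_image_subset_coset (hnorm : t ∈ Subgroup.normalizer (Γ : Set G)) :
    (fun a : G => a * t * a⁻¹) '' (Γ : Set G) ⊆ (fun γ : G => γ * t) '' (Γ : Set G) := by
  rintro _ ⟨a, ha, rfl⟩
  have hinv : t * a⁻¹ * t⁻¹ ∈ Γ := (Subgroup.mem_normalizer_iff.mp hnorm _).mp (Γ.inv_mem ha)
  exact ⟨a * (t * a⁻¹ * t⁻¹), Γ.mul_mem ha hinv, by group⟩

theorem conj_image_eq_coset [Finite Γ] (hnorm : t ∈ Subgroup.normalizer (Γ : Set G))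
    (hcent : ∀ a ∈ Γ, a * t = t * a → a = 1) :
    (fun a : G => a * t * a⁻¹) '' (Γ : Set G) = (fun γ : G => γ * t) '' (Γ : Set G) := by
  have hfin : (Γ : Set G).Finite := Set.toFinite _
  refine Set.eq_of_subset_of_ncard_le (conj_image_subset_coset hnorm) ?_ (hfin.image _)
  calc ((fun γ : G => γ * t) '' (Γ : Set G)).ncard
      ≤ (Γ : Set G).ncard := Set.ncard_image_le hfin
    _ = ((fun a : G => a * t * a⁻¹) '' (Γ : Set G)).ncard :=
        (injOn_conj_of_centralizer_trivial hcent).ncard_image.symm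

theorem conj_mem_coset_of_mem_normalizer (hnorm : t ∈ Subgroup.normalizer (Γ : Set G)) {x y : G}
    (hx : x ∈ (fun γ : G => γ * t) '' (Γ : Set G))
    (hy : y ∈ (fun γ : G => γ * t) '' (Γ : Set G)) :
    x * y * x⁻¹ ∈ (fun γ : G => γ * t) '' (Γ : Set G) := by
  obtain ⟨a, ha, rfl⟩ := hx
  obtain ⟨b, hb, rfl⟩ := hy
  have hquot : t * (b * a⁻¹) * t⁻¹ ∈ Γ :=
    (Subgroup.mem_normalizer_iff.mp hnorm _).mp (Γ.mul_mem hb (Γ.inv_mem ha))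
  exact ⟨a * (t * (b * a⁻¹) * t⁻¹), Γ.mul_mem ha hquot, by group⟩

end Conjugates

theorem stmt8_general {G : Type*} [Group G] (t : G) (Γ : Subgroup G) [Finite Γ]
    (hnorm : t ∈ Subgroup.normalizer (Γ : Set G))
    (hcent : ∀ a ∈ Γ, a * t = t * a → a = 1) :
    Set.InjOn (fun a : G => a * t * a⁻¹) (Γ : Set G) ∧
    (fun a : G => a * t * a⁻¹) '' (Γ : Set G) = (fun γ : G => γ * t) '' (Γ : Set G) ∧
    (∀ x ∈ (fun a : G => a * t * a⁻¹) '' (Γ : Set G), ∃ h : G, h * t * h⁻¹ = x) ∧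
    (∀ x ∈ (fun a : G => a * t * a⁻¹) '' (Γ : Set G),
      ∀ y ∈ (fun a : G => a * t * a⁻¹) '' (Γ : Set G),
        x * y * x⁻¹ ∈ (fun a : G => a * t * a⁻¹) '' (Γ : Set G)) ∧
    ((fun a : G => a * t * a⁻¹) '' (Γ : Set G)).ncard = Nat.card Γ := by
  have hinj := injOn_conj_of_centralizer_trivial hcent
  have hcoset := conj_image_eq_coset hnorm hcent
  refine ⟨hinj, hcoset, ?subset_class, ?closed, hinj.ncard_image⟩
  case subset_class =>
    rintro _ ⟨a, -, rfl⟩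
    exact ⟨a, rfl⟩
  case closed =>
    rw [hcoset]
    exact fun x hx y hy => conj_mem_coset_of_mem_normalizer hnorm hx hy

/-- Let `G` be a finite group, `t ∈ G`, and `Γ ≤ G` abelian, normalized by `t`, with
trivial centralizer of `t` in `Γ`.  Then `a ↦ a t a⁻¹` is injective on `Γ`, its image
`X` is the coset `Γ t`, `X` is contained in the conjugacy class of `t` and closed
under conjugation, and `X` has exactly `|Γ|` elements. -/
theorem stmt8 {G : Type*} [Group G] [Finite G] (t : G) (Γ : Subgroup G)
    (hab : ∀ a ∈ Γ, ∀ b ∈ Γ, a * b = b * a)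
    (hnorm : t ∈ Subgroup.normalizer (Γ : Set G))
    (hcent : ∀ a ∈ Γ, a * t = t * a → a = 1) :
    Set.InjOn (fun a : G => a * t * a⁻¹) (Γ : Set G) ∧
    (fun a : G => a * t * a⁻¹) '' (Γ : Set G) = (fun γ : G => γ * t) '' (Γ : Set G) ∧
    (∀ x ∈ (fun a : G => a * t * a⁻¹) '' (Γ : Set G), ∃ h : G, h * t * h⁻¹ = x) ∧
    (∀ x ∈ (fun a : G => a * t * a⁻¹) '' (Γ : Set G),
      ∀ y ∈ (fun a : G => a * t * a⁻¹) '' (Γ : Set G),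
        x * y * x⁻¹ ∈ (fun a : G => a * t * a⁻¹) '' (Γ : Set G)) ∧
    ((fun a : G => a * t * a⁻¹) '' (Γ : Set G)).ncard = Nat.card Γ :=
  stmt8_general t Γ hnorm hcent
end

section
/- Let G be a finite solvable group and g ∈ G an element whose conjugacy class O = O_g^G generates G. Let H be a finite group, h ∈ H, and O' = O_h^H the conjugacy class of h in H. Suppose there exists a bijection f : O → O' satisfying f(x y x⁻¹) = f(x) f(y) f(x)⁻¹ for all x, y ∈ O. Then the subgroup of H generated by O' is solvable. -/
/-!
Let `P ≤ G × H` be generated by the pairs `(x, f x)` with `x` in the class `O` of `g`. Every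
`(a, b) ∈ P` satisfies `f (a y a⁻¹) = b (f y) b⁻¹` on `O`, since this holds for the generators and
passes to products and inverses. Hence if `(1, b) ∈ P`, then `b` centralizes `f(O)`, so the first
projection exhibits `P` as a central extension of `⟨O⟩`. Thus `P` is solvable, and so is its second
projection `⟨f(O)⟩`.
-/

open Subgroup

section CentralExtension

variable {G H : Type*} [Group G] [Group H]

theorem isSolvable_of_ker_le_center (φ : G →* H) (hφ : φ.ker ≤ center G)
    [Group.IsSolvable H] : Group.IsSolvable G :=
  have : Group.IsSolvable (center G) := Group.isSolvable_of_comm mul_comm'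
  Group.isSolvable_of_ker_le_range (center G).subtype φ (by rwa [range_subtype])

theorem isSolvable_map_snd_of_isSolvable_map_fst {P : Subgroup (G × H)}
    [Group.IsSolvable (P.map (MonoidHom.fst G H))]
    (hP : ∀ b, (1, b) ∈ P → b ∈ centralizer (P.map (MonoidHom.snd G H) : Set H)) :
    Group.IsSolvable (P.map (MonoidHom.snd G H)) := by
  have ker_le_center : ((MonoidHom.fst G H).subgroupMap P).ker ≤ center P := by
    rintro ⟨⟨a, b⟩, hab⟩ ha
    obtain rfl : a = 1 := congrArg Subtype.val ha
    refine mem_center_iff.mpr fun ⟨⟨c, d⟩, hcd⟩ ↦ Subtype.ext (Prod.ext ?_ ?_)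
    · exact (mul_one c).trans (one_mul c).symm
    · exact mem_centralizer_iff.mp (hP b hab) d (mem_map_of_mem _ hcd)
  have : Group.IsSolvable P := isSolvable_of_ker_le_center _ ker_le_center
  exact Group.isSolvable_of_surjective ((MonoidHom.snd G H).subgroupMap_surjective P)

end CentralExtension

section ConjIntertwiner

variable {G H : Type*} [Group G] [Group H] {X : Set G} {f : G → H}

/-- The pairs `(a, b)` such that conjugation by `a` preserves `X` and is carried by `f` to
conjugation by `b`. Only the values of `f` on `X` matter. -/
def conjIntertwiner (X : Set G) (f : G → H) : Subgroup (G × H) where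
  carrier := {p | p.1 ∈ normalizer X ∧ ∀ y ∈ X, f (p.1 * y * p.1⁻¹) = p.2 * f y * p.2⁻¹}
  one_mem' := ⟨one_mem _, by simp⟩
  mul_mem' := by
    rintro ⟨a, b⟩ ⟨c, d⟩ ⟨ha, hab⟩ ⟨hc, hcd⟩
    refine ⟨mul_mem ha hc, fun y hy ↦ ?_⟩
    have hcy : c * y * c⁻¹ ∈ X := (mem_set_normalizer_iff.mp hc y).mp hy
    calc f (a * c * y * (a * c)⁻¹) = f (a * (c * y * c⁻¹) * a⁻¹) := by group
      _ = b * (d * f y * d⁻¹) * b⁻¹ := by rw [hab _ hcy, hcd y hy]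
      _ = b * d * f y * (b * d)⁻¹ := by group
  inv_mem' := by
    rintro ⟨a, b⟩ ⟨ha, hab⟩
    refine ⟨inv_mem ha, fun y hy ↦ ?_⟩
    have hay : a⁻¹ * y * a⁻¹⁻¹ ∈ X := (mem_set_normalizer_iff.mp (inv_mem ha) y).mp hy
    calc f (a⁻¹ * y * a⁻¹⁻¹) = b⁻¹ * (b * f (a⁻¹ * y * a⁻¹⁻¹) * b⁻¹) * b⁻¹⁻¹ := by group
      _ = b⁻¹ * f (a * (a⁻¹ * y * a⁻¹⁻¹) * a⁻¹) * b⁻¹⁻¹ := by rw [hab _ hay]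
      _ = b⁻¹ * f y * b⁻¹⁻¹ := by group

theorem closure_graphOn_le_conjIntertwiner (hX : X ⊆ normalizer X)
    (hf : ∀ x ∈ X, ∀ y ∈ X, f (x * y * x⁻¹) = f x * f y * (f x)⁻¹) :
    closure (X.graphOn f) ≤ conjIntertwiner X f := by
  rw [closure_le]
  rintro _ ⟨x, hx, rfl⟩
  exact ⟨hX hx, hf x hx⟩

theorem mem_centralizer_image_of_one_mem_conjIntertwiner {b : H}
    (hb : (1, b) ∈ conjIntertwiner X f) : b ∈ centralizer (f '' X) := by
  rintro _ ⟨y, hy, rfl⟩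
  have f_y_eq : f y = b * f y * b⁻¹ := by simpa using hb.2 y hy
  exact eq_mul_inv_iff_mul_eq.mp f_y_eq

theorem map_fst_closure_graphOn (X : Set G) (f : G → H) :
    (closure (X.graphOn f)).map (MonoidHom.fst G H) = closure X := by
  rw [MonoidHom.map_closure, MonoidHom.coe_fst, Set.image_fst_graphOn]

theorem map_snd_closure_graphOn (X : Set G) (f : G → H) :
    (closure (X.graphOn f)).map (MonoidHom.snd G H) = closure (f '' X) := by
  rw [MonoidHom.map_closure, MonoidHom.coe_snd, Set.image_snd_graphOn]

end ConjIntertwiner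

theorem stmt9_general {G H : Type*} [Group G] [Group H] {X : Set G} {f : G → H}
    [Group.IsSolvable (closure X)] (hX : X ⊆ normalizer X)
    (hf : ∀ x ∈ X, ∀ y ∈ X, f (x * y * x⁻¹) = f x * f y * (f x)⁻¹) :
    Group.IsSolvable (closure (f '' X)) := by
  have : Group.IsSolvable ((closure (X.graphOn f)).map (MonoidHom.fst G H)) := by
    rwa [map_fst_closure_graphOn]
  rw [← map_snd_closure_graphOn]
  refine isSolvable_map_snd_of_isSolvable_map_fst fun b hb ↦ ?_
  rw [map_snd_closure_graphOn, centralizer_closure]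
  exact mem_centralizer_image_of_one_mem_conjIntertwiner
    (closure_graphOn_le_conjIntertwiner hX hf hb)

theorem normalizer_setOf_conj_eq_top {G : Type*} [Group G] (g : G) :
    normalizer {x : G | ∃ k : G, k * g * k⁻¹ = x} = ⊤ := by
  rw [eq_top_iff, le_set_normalizer_iff]
  rintro a - _ ⟨k, rfl⟩
  exact ⟨a * k, by group⟩

/-- Let `G` be a finite solvable group whose conjugacy class of `g` generates `G`,
let `H` be a finite group and `h ∈ H`, and suppose `f` restricts to a bijection from
the conjugacy class of `g` onto the conjugacy class of `h` that intertwines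
conjugation (an isomorphism of racks).  Then the subgroup of `H` generated by the
conjugacy class of `h` is solvable. -/
theorem stmt9 {G H : Type*} [Group G] [Finite G] [Group.IsSolvable G]
    [Group H] [Finite H]
    (g : G) (hgen : Subgroup.closure {x : G | ∃ k : G, k * g * k⁻¹ = x} = ⊤)
    (h : H) (f : G → H)
    (hbij : Set.BijOn f {x : G | ∃ k : G, k * g * k⁻¹ = x}
      {y : H | ∃ k : H, k * h * k⁻¹ = y})
    (hf : ∀ x ∈ {x : G | ∃ k : G, k * g * k⁻¹ = x},
      ∀ y ∈ {x : G | ∃ k : G, k * g * k⁻¹ = x},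
        f (x * y * x⁻¹) = f x * f y * (f x)⁻¹) :
    Group.IsSolvable (Subgroup.closure {y : H | ∃ k : H, k * h * k⁻¹ = y}) := by
  rw [← hbij.image_eq]
  exact stmt9_general (by simp [normalizer_setOf_conj_eq_top]) hf
end

section
/- Let E be a finite-dimensional real inner product space and w : E → E a linear isometric equivalence with no nonzero fixed vector (w(v) = v implies v = 0). Then for every nonzero α ∈ E there exists a nonzero v ∈ E with s_α(w(v)) = v, where s_α is the orthogonal reflection s_α(x) = x − (2⟨x, α⟩/⟨α, α⟩)·α. In other words, for every nonzero α, the composition s_α ∘ w has a nonzero fixed vector. -/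
/-!
Since `w - 1` is injective on a finite-dimensional space, it is surjective, so `α = w v - v` for
some `v`. As `‖w v‖ = ‖v‖`, the hyperplane orthogonal to `α` is the perpendicular bisector of `v`
and `w v`, and therefore the reflection in it sends `w v` back to `v`.
-/

theorem exists_map_sub_eq_of_forall_fixed_eq_zero {K V : Type*} [DivisionRing K] [AddCommGroup V]
    [Module K V] [FiniteDimensional K V] (f : V →ₗ[K] V) (hf : ∀ v, f v = v → v = 0) (a : V) :
    ∃ v, f v - v = a := by
  have sub_id_injective : Function.Injective (f - LinearMap.id : V →ₗ[K] V) :=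
    (injective_iff_map_eq_zero _).mpr fun v hv ↦ hf v (sub_eq_zero.mp hv)
  exact LinearMap.injective_iff_surjective.mp sub_id_injective a

section Reflection

variable {E : Type*} [NormedAddCommGroup E] [InnerProductSpace ℝ E]

theorem reflection_orthogonal_span_singleton_apply (a x : E) :
    (ℝ ∙ a)ᗮ.reflection x = x - (2 * inner ℝ x a / inner ℝ a a) • a := by
  rw [Submodule.reflection_orthogonal_apply, Submodule.reflection_singleton_apply, neg_sub,
    real_inner_self_eq_norm_sq, real_inner_comm, ← Nat.cast_smul_eq_nsmul ℝ, smul_smul,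
    mul_div_assoc]
  norm_num

theorem exists_ne_zero_reflection_map_eq_self (w : E →ₗᵢ[ℝ] E) {a : E} (ha : a ≠ 0)
    (ha_range : ∃ v, w v - v = a) : ∃ v, v ≠ 0 ∧ (ℝ ∙ a)ᗮ.reflection (w v) = v := by
  obtain ⟨v, rfl⟩ := ha_range
  refine ⟨v, ?_, Submodule.reflection_sub (w.norm_map v)⟩
  rintro rfl
  exact ha (by rw [map_zero, sub_zero])

end Reflection

/-- Let `E` be a finite-dimensional real inner product space and `w` a linear
isometric equivalence of `E` with no nonzero fixed vector.  Then for every nonzero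
`α ∈ E` the composition `s_α ∘ w` of `w` with the orthogonal reflection in the
hyperplane orthogonal to `α` has a nonzero fixed vector. -/
theorem stmt11 {E : Type*} [NormedAddCommGroup E] [InnerProductSpace ℝ E]
    [FiniteDimensional ℝ E]
    (w : E ≃ₗᵢ[ℝ] E) (hw : ∀ v : E, w v = v → v = 0)
    (α : E) (hα : α ≠ 0) :
    ∃ v : E, v ≠ 0 ∧
      w v - (2 * (inner ℝ (w v) α : ℝ) / (inner ℝ α α : ℝ)) • α = v := by
  have hα_range : ∃ v, w v - v = α :=
    exists_map_sub_eq_of_forall_fixed_eq_zero w.toLinearEquiv.toLinearMap hw α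
  obtain ⟨v, hv_ne, hv_fixed⟩ :=
    exists_ne_zero_reflection_map_eq_self w.toLinearIsometry hα hα_range
  exact ⟨v, hv_ne, (reflection_orthogonal_span_singleton_apply α (w v)).symm.trans hv_fixed⟩
end
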